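/- Let Φ assign to every finite vector with nonnegative entries (of any length) a value Φ(p) ∈ ℝ≥0, invariantly under permuting entries and under appending zero entries, such that Φ(p ⊕ q) = Φ(p) + Φ(q) and Φ(p ⊗ q) = Φ(p)·Φ(q) for all p, q, Φ of the single-entry vector (1) is 1, and Φ of the single-entry vector (0) is 0. (i) If Φ is such that p ≽₁ q implies Φ(p) ≤ Φ(q), then there exists α ∈ [0,1] with Φ = f_α; conversely, each f_α with α ∈ [0,1] has all of these properties. (ii) If Φ is such that p ≽₁ q implies Φ(p) ≥ Φ(q), then there exists α ∈ [1,∞) with Φ = f_α; conversely, each f_α with α ∈ [1,∞) has all of these properties. -/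

import Mathlib

open scoped BigOperators NNReal

noncomputable section

/-- A probability vector on a finite index type. -/
def IsProbVec {ι : Type*} [Fintype ι] (p : ι → ℝ) : Prop :=
  (∀ i, 0 ≤ p i) ∧ ∑ i, p i = 1

/-- A (column-)stochastic matrix: nonnegative entries, every column sums to `1`. -/
def IsStochastic {ι κ : Type*} [Fintype ι] [Fintype κ] (T : ι → κ → ℝ) : Prop :=
  (∀ i j, 0 ≤ T i j) ∧ ∀ j, ∑ i, T i j = 1

/-- Matrix–vector multiplication. -/
def matVec {ι κ : Type*} [Fintype κ] (T : ι → κ → ℝ) (v : κ → ℝ) : ι → ℝ :=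
  fun i => ∑ j, T i j * v j

/-- Kronecker product of two vectors. -/
def kron {ι κ : Type*} (p : ι → ℝ) (q : κ → ℝ) : ι × κ → ℝ :=
  fun x => p x.1 * q x.2

/-- `n`-fold Kronecker power of a vector. -/
def kpow {ι : Type*} (p : ι → ℝ) (n : ℕ) : (Fin n → ι) → ℝ :=
  fun f => ∏ j, p (f j)

/-- Kronecker product reindexed along `Fin (m * n)`. -/
def kronFin {m n : ℕ} (p : Fin m → ℝ) (q : Fin n → ℝ) : Fin (m * n) → ℝ :=
  fun i => kron p q (finProdFinEquiv.symm i)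

/-- The sum of the `k` largest entries of a nonnegative vector, expressed as the
largest sum over subsets of cardinality at most `k`. -/
def topSum {ι : Type*} [Fintype ι] (p : ι → ℝ) (k : ℕ) : ℝ :=
  ⨆ s ∈ {s : Finset ι | s.card ≤ k}, ∑ i ∈ s, p i

/-- Majorization for nonnegative vectors (possibly of different lengths):
equal total sums, and for each `k` the sum of the `k` largest entries of `p` is
at least that of `q`. -/
def Majorizes {ι κ : Type*} [Fintype ι] [Fintype κ] (p : ι → ℝ) (q : κ → ℝ) : Prop :=
  (∑ i, p i = ∑ j, q j) ∧ ∀ k : ℕ, topSum q k ≤ topSum p k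

/-- The size of the support, `‖p‖₀`. -/
def supp0 {ι : Type*} [Fintype ι] (p : ι → ℝ) : ℕ :=
  (Finset.univ.filter fun i => p i ≠ 0).card

/-- Entrywise nonnegativity. -/
def NonnegVec {n : ℕ} (p : Fin n → ℝ) : Prop := ∀ i, 0 ≤ p i

/-- The modified majorization preorder `≽₀,₁`: majorization plus equality of
support sizes. -/
def MajMod {ι κ : Type*} [Fintype ι] [Fintype κ] (p : ι → ℝ) (q : κ → ℝ) : Prop :=
  Majorizes p q ∧ supp0 p = supp0 q

/-- `f_α(p) = ∑_{i ∈ supp p} (p i)^α`. -/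
def fA {ι : Type*} [Fintype ι] (α : ℝ) (p : ι → ℝ) : ℝ :=
  ∑ i, if p i = 0 then 0 else p i ^ α

/-- Shannon entropy (the terms with `p i = 0` vanish). -/
def H1ent {ι : Type*} [Fintype ι] (p : ι → ℝ) : ℝ := -∑ i, p i * Real.log (p i)

/-- `H₀'(p) = ∑_{i ∈ supp p} log p_i`. -/
def H0' {ι : Type*} [Fintype ι] (p : ι → ℝ) : ℝ :=
  ∑ i, if p i = 0 then 0 else Real.log (p i)

/-- Rényi entropy of order `α` (with `α = 1` the Shannon entropy). -/
def Hent {ι : Type*} [Fintype ι] (α : ℝ) (p : ι → ℝ) : ℝ :=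
  if α = 1 then -∑ i, p i * Real.log (p i)
  else (1 / (1 - α)) * Real.log (∑ i, if p i = 0 then 0 else p i ^ α)

/-- Min-entropy `H_∞(p) = - log max_i p_i`. -/
def HentInf {ι : Type*} [Fintype ι] (p : ι → ℝ) : ℝ := -Real.log (⨆ i, p i)

/-- Kullback–Leibler divergence (the terms with `p i = 0` vanish). -/
def KL {n : ℕ} (p q : Fin n → ℝ) : ℝ :=
  ∑ i, p i * Real.log (p i / q i)

/-- Rényi divergence of order `α` for vectors with common support. -/
def Renyi {n : ℕ} (α : ℝ) (p q : Fin n → ℝ) : ℝ :=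
  if α = 1 then ∑ i, p i * Real.log (p i / q i)
  else (1 / (α - 1)) * Real.log (∑ i, if p i = 0 then 0 else p i ^ α * q i ^ (1 - α))

/-- Max-divergence `D_∞(p‖q) = max_{i ∈ supp q} log (p_i / q_i)`. -/
def RenyiInf {n : ℕ} (p q : Fin n → ℝ) : ℝ :=
  ⨆ i ∈ Finset.univ.filter (fun i => q i ≠ 0), Real.log (p i / q i)

/-- Rényi divergence with values in the extended reals `[0, ∞]`. -/
def RenyiE {n : ℕ} (α : ℝ) (p q : Fin n → ℝ) : EReal :=
  if α = 1 then
    (if ∀ i, p i ≠ 0 → q i ≠ 0 then ((∑ i, p i * Real.log (p i / q i) : ℝ) : EReal) else ⊤)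
  else if α < 1 then
    (if ∃ i, p i ≠ 0 ∧ q i ≠ 0 then
      (((1 / (α - 1)) *
        Real.log (∑ i, if p i = 0 ∨ q i = 0 then 0 else p i ^ α * q i ^ (1 - α)) : ℝ) : EReal)
    else (⊤ : EReal))
  else
    (if ∀ i, p i ≠ 0 → q i ≠ 0 then
      (((1 / (α - 1)) *
        Real.log (∑ i, if p i = 0 then 0 else p i ^ α * q i ^ (1 - α)) : ℝ) : EReal)
    else (⊤ : EReal))

/-- The common support of a tuple of vectors. -/
def suppIdx {d n : ℕ} (P : Fin d → Fin n → ℝ) : Finset (Fin n) :=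
  Finset.univ.filter fun i => ∃ k, P k i ≠ 0

/-- `f_α(P) = ∑_{i ∈ I} ∏_k (p_i^{(k)})^{α_k}` with `I` the common support. -/
def fMat {d n : ℕ} (α : Fin d → ℝ) (P : Fin d → Fin n → ℝ) : ℝ :=
  ∑ i ∈ suppIdx P, ∏ k, P k i ^ α k

/-- The matrix `α`-divergence `D_α`. -/
def Dmat {d n : ℕ} (α : Fin d → ℝ) (P : Fin d → Fin n → ℝ) : ℝ :=
  (1 / ((⨆ k, α k) - 1)) * Real.log (∑ i ∈ suppIdx P, ∏ k, P k i ^ α k)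

/-- The tropical matrix divergence `D^𝕋_β`. -/
def DmatT {d n : ℕ} (β : Fin d → ℝ) (P : Fin d → Fin n → ℝ) : ℝ :=
  (1 / (⨆ k, β k)) * Real.log (⨆ i ∈ suppIdx P, ∏ k, P k i ^ β k)

/-- Membership in `A₊`: entries summing to `1`, all nonnegative. -/
def memAplus {d : ℕ} (α : Fin d → ℝ) : Prop := (∑ k, α k = 1) ∧ ∀ k, 0 ≤ α k

/-- Membership in `A₋`: entries summing to `1`, one entry `≥ 1`, the others `≤ 0`. -/
def memAminus {d : ℕ} (α : Fin d → ℝ) : Prop :=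
  (∑ k, α k = 1) ∧ ∃ k, 1 ≤ α k ∧ ∀ l, l ≠ k → α l ≤ 0

/-- Membership in `B₋`: entries summing to `0`, one entry `≥ 0`, the others `≤ 0`. -/
def memBminus {d : ℕ} (β : Fin d → ℝ) : Prop :=
  (∑ k, β k = 0) ∧ ∃ k, 0 ≤ β k ∧ ∀ l, l ≠ k → β l ≤ 0

/-- `α` is none of the standard basis vectors `e₁, …, e_d`. -/
def notBasis {d : ℕ} (α : Fin d → ℝ) : Prop := ∀ k, α ≠ Pi.single k 1

/-- ℓ¹-distance of two vectors, padding with zeros to a common length. -/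
def l1PadDist {m n : ℕ} (p : Fin m → ℝ) (q : Fin n → ℝ) : ℝ :=
  ∑ i : Fin (max m n),
    |(if h : (i : ℕ) < m then p ⟨(i : ℕ), h⟩ else 0) -
      (if h : (i : ℕ) < n then q ⟨(i : ℕ), h⟩ else 0)|

/-- Index type of the direct sum `⨁_{s=0}^{n-1} p^{⊗(n-1-s)} ⊗ q^{⊗s}`. -/
abbrev TrickIdx (m m' n : ℕ) : Type :=
  Σ s : Fin n, (Fin (n - 1 - (s : ℕ)) → Fin m) × (Fin (s : ℕ) → Fin m')

/-- The standard catalyst `(1/n) ⨁_{s=0}^{n-1} p^{⊗(n-1-s)} ⊗ q^{⊗s}`. -/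
def trick {m m' : ℕ} (p : Fin m → ℝ) (q : Fin m' → ℝ) (n : ℕ) : TrickIdx m m' n → ℝ :=
  fun x => (1 / (n : ℝ)) * (kpow p (n - 1 - (x.1 : ℕ)) x.2.1 * kpow q (x.1 : ℕ) x.2.2)

/-- A valid tuple: nonnegative entries and common support across the tuple. -/
def TupOK {d n : ℕ} (P : Fin d → Fin n → ℝ) : Prop :=
  (∀ k i, 0 ≤ P k i) ∧ ∀ k l i, P k i ≠ 0 ↔ P l i ≠ 0

/-- Matrix majorization of tuples: a single stochastic matrix carrying each column
of `P` to the corresponding column of `Q`. -/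
def TupMaj {d m n : ℕ} (P : Fin d → Fin m → ℝ) (Q : Fin d → Fin n → ℝ) : Prop :=
  ∃ T : Fin n → Fin m → ℝ, IsStochastic T ∧ ∀ k, matVec T (P k) = Q k

/-- The basic properties of a normalized additive and multiplicative
functional on finite nonnegative vectors of arbitrary length: nonnegative
values, permutation invariance, invariance under appending a zero entry,
additivity under direct sums, multiplicativity under Kronecker products, and
normalization on the single-entry vectors `(1)` and `(0)`. -/
def PhiBase (Φ : ∀ n : ℕ, (Fin n → ℝ) → ℝ) : Prop :=
  (∀ (n : ℕ) (p : Fin n → ℝ), NonnegVec p → 0 ≤ Φ n p) ∧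
  (∀ (n : ℕ) (σ : Equiv.Perm (Fin n)) (p : Fin n → ℝ), NonnegVec p →
    Φ n (p ∘ σ) = Φ n p) ∧
  (∀ (n : ℕ) (p : Fin n → ℝ), NonnegVec p → Φ (n + 1) (Fin.snoc p 0) = Φ n p) ∧
  (∀ (m n : ℕ) (p : Fin m → ℝ) (q : Fin n → ℝ), NonnegVec p → NonnegVec q →
    Φ (m + n) (Fin.append p q) = Φ m p + Φ n q) ∧
  (∀ (m n : ℕ) (p : Fin m → ℝ) (q : Fin n → ℝ), NonnegVec p → NonnegVec q →
    Φ (m * n) (kronFin p q) = Φ m p * Φ n q) ∧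
  Φ 1 (fun _ => 1) = 1 ∧ Φ 1 (fun _ => 0) = 0


lemma topSum_le' {ι : Type*} [Fintype ι] (p : ι → ℝ) (k : ℕ) (B : ℝ) (hB : 0 ≤ B)
    (h : ∀ s : Finset ι, s.card ≤ k → ∑ i ∈ s, p i ≤ B) : topSum p k ≤ B := by
  unfold topSum
  refine Real.iSup_le (fun s => Real.iSup_le (fun hs => h s hs) hB) hB

lemma le_topSum' {ι : Type*} [Fintype ι] (p : ι → ℝ) (k : ℕ) (s : Finset ι) (hs : s.card ≤ k) :
    ∑ i ∈ s, p i ≤ topSum p k := by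
  unfold topSum
  have h1 : (⨆ (_ : s ∈ {s : Finset ι | s.card ≤ k}), ∑ i ∈ s, p i) = ∑ i ∈ s, p i :=
    ciSup_pos (f := fun _ : s ∈ {s : Finset ι | s.card ≤ k} => ∑ i ∈ s, p i) hs
  have h2 := le_ciSup (f := fun s : Finset ι => ⨆ (_ : s ∈ {s : Finset ι | s.card ≤ k}), ∑ i ∈ s, p i)
    (Set.finite_range _).bddAbove s
  simp only [h1] at h2
  exact h2

lemma topSum_nonneg' {ι : Type*} [Fintype ι] (p : ι → ℝ) (k : ℕ) : 0 ≤ topSum p k := by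
  simpa using le_topSum' p k ∅ (by simp)

lemma maj_two (a b c d : ℝ) (ha : 0 ≤ a) (hb : 0 ≤ b) (hc : 0 ≤ c) (hd : 0 ≤ d)
    (hs : a + b = c + d) (hca : c ≤ a) (hda : d ≤ a) :
    Majorizes (![a, b] : Fin 2 → ℝ) (![c, d] : Fin 2 → ℝ) := by
  refine ⟨by simpa using hs, fun k => topSum_le' _ _ _ (topSum_nonneg' _ _) fun s hsk => ?_⟩
  have hq : ∀ j : Fin 2, 0 ≤ (![c, d] : Fin 2 → ℝ) j := by
    intro j; fin_cases j <;> simpa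
  have hqa : ∀ j : Fin 2, (![c, d] : Fin 2 → ℝ) j ≤ a := by
    intro j; fin_cases j <;> simpa
  rcases Nat.lt_or_ge 1 s.card with h | h
  · refine le_trans (Finset.sum_le_univ_sum_of_nonneg hq) ?_
    refine le_trans ?_ (le_topSum' _ k Finset.univ (by simp; omega))
    simp [hs]
  · rcases Nat.eq_zero_or_pos s.card with h0 | h0
    · rw [Finset.card_eq_zero] at h0
      subst h0
      simpa using topSum_nonneg' _ _
    · obtain ⟨j, rfl⟩ := Finset.card_eq_one.1 (le_antisymm h h0)
      refine le_trans ?_ (le_topSum' _ k {0} (by simpa using hsk))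
      simpa using hqa j

lemma hinge {ι κ : Type*} [Fintype ι] [Fintype κ] (p : ι → ℝ) (q : κ → ℝ)
    (h : Majorizes p q) (t : ℝ) (ht : 0 ≤ t) :
    ∑ i, min (p i) t ≤ ∑ j, min (q j) t := by
  classical
  have e : ∀ x : ℝ, min x t = x - max (x - t) 0 := by
    intro x
    rcases le_total x t with h | h
    · rw [min_eq_left h, max_eq_right (by linarith)]; ring
    · rw [min_eq_right h, max_eq_left (by linarith)]; ring
  simp only [e, Finset.sum_sub_distrib, h.1]
  have key : ∑ j, max (q j - t) 0 ≤ ∑ i, max (p i - t) 0 := by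
    set S := Finset.univ.filter fun j => t < q j with hS
    have h1 : ∑ j, max (q j - t) 0 = ∑ j ∈ S, q j - S.card * t := by
      rw [← nsmul_eq_mul, ← Finset.sum_const, ← Finset.sum_sub_distrib, hS, Finset.sum_filter]
      refine Finset.sum_congr rfl fun j _ => ?_
      split_ifs with hj
      · exact max_eq_left (by linarith)
      · exact max_eq_right (by linarith)
    have h2 := le_topSum' q S.card S le_rfl
    have h3 := h.2 S.card
    have hpos : ∀ i, 0 ≤ max (p i - t) 0 := fun i => le_max_right _ _
    have h4 : topSum p S.card ≤ ∑ i, max (p i - t) 0 + S.card * t := by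
      refine topSum_le' _ _ _ (add_nonneg (Finset.sum_nonneg fun i _ => hpos i) (by positivity))
        fun s hs => ?_
      have a1 : ∑ i ∈ s, p i ≤ ∑ i ∈ s, (max (p i - t) 0 + t) :=
        Finset.sum_le_sum fun i _ => by linarith [le_max_left (p i - t) 0]
      rw [Finset.sum_add_distrib, Finset.sum_const, nsmul_eq_mul] at a1
      have a2 := Finset.sum_le_univ_sum_of_nonneg (s := s) hpos
      have a3 : (s.card : ℝ) * t ≤ S.card * t := by gcongr
      linarith
    linarith
  linarith

lemma integ_piece (α M x : ℝ) (hα : 0 < α) (hα1 : α ≠ 1) (hx : 0 < x) (hxM : x ≤ M) :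
    IntervalIntegrable (fun t : ℝ => t ^ (α - 2) * min x t) MeasureTheory.volume 0 M ∧
    ∫ t in (0:ℝ)..M, t ^ (α - 2) * min x t =
      x ^ α / (α * (1 - α)) + M ^ (α - 1) / (α - 1) * x := by
  have h0 : Set.EqOn (fun t : ℝ => t ^ (α - 1)) (fun t : ℝ => t ^ (α - 2) * min x t)
      (Set.uIoc 0 x) := by
    intro t ht
    rw [Set.uIoc_of_le hx.le] at ht
    simp only
    rw [min_eq_right ht.2, ← Real.rpow_add_one ht.1.ne']
    ring_nf
  have h1 : Set.EqOn (fun t : ℝ => t ^ (α - 2) * x) (fun t : ℝ => t ^ (α - 2) * min x t)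
      (Set.uIoc x M) := by
    intro t ht
    rw [Set.uIoc_of_le hxM] at ht
    simp only
    rw [min_eq_left ht.1.le]
  have nz : (0:ℝ) ∉ Set.uIcc x M := by
    rw [Set.uIcc_of_le hxM]; intro h; linarith [h.1]
  have i0 : IntervalIntegrable (fun t : ℝ => t ^ (α - 1)) MeasureTheory.volume 0 x :=
    intervalIntegral.intervalIntegrable_rpow' (by linarith)
  have i1 : IntervalIntegrable (fun t : ℝ => t ^ (α - 2) * x) MeasureTheory.volume x M :=
    (intervalIntegral.intervalIntegrable_rpow (Or.inr nz)).mul_const x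
  have j0 := i0.congr h0
  have j1 := i1.congr h1
  refine ⟨j0.trans j1, ?_⟩
  rw [← intervalIntegral.integral_add_adjacent_intervals j0 j1]
  have e0 : ∫ t in (0:ℝ)..x, t ^ (α - 2) * min x t = ∫ t in (0:ℝ)..x, t ^ (α - 1) := by
    refine intervalIntegral.integral_congr_ae (Filter.Eventually.of_forall fun t ht => (h0 ht).symm)
  have e1 : ∫ t in x..M, t ^ (α - 2) * min x t = ∫ t in x..M, t ^ (α - 2) * x := by
    refine intervalIntegral.integral_congr_ae (Filter.Eventually.of_forall fun t ht => (h1 ht).symm)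
  rw [e0, e1, intervalIntegral.integral_mul_const, integral_rpow (Or.inl (by linarith)),
    integral_rpow (Or.inr ⟨by intro h; apply hα1; linarith, nz⟩)]
  have z : (0:ℝ) ^ (α - 1 + 1) = 0 := by
    rw [sub_add_cancel]; exact Real.zero_rpow hα.ne'
  rw [z]
  have r1 : α - 1 + 1 = α := by ring
  have r2 : α - 2 + 1 = α - 1 := by ring
  have r3 : x ^ (α - 1) = x ^ α / x := Real.rpow_sub_one hx.ne' α
  rw [r1, r2, r3]
  have : α - 1 ≠ 0 := sub_ne_zero.2 hα1
  have : 1 - α ≠ 0 := sub_ne_zero.2 hα1.symm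
  field_simp
  ring

lemma integ_piece' (α M x : ℝ) (hα : 0 < α) (hα1 : α ≠ 1) (hx : 0 ≤ x) (hxM : x ≤ M) :
    IntervalIntegrable (fun t : ℝ => t ^ (α - 2) * min x t) MeasureTheory.volume 0 M ∧
    ∫ t in (0:ℝ)..M, t ^ (α - 2) * min x t =
      (if x = 0 then 0 else x ^ α) / (α * (1 - α)) + M ^ (α - 1) / (α - 1) * x := by
  rcases hx.eq_or_lt with rfl | hx
  · have h0 : Set.EqOn (fun t : ℝ => (0:ℝ)) (fun t : ℝ => t ^ (α - 2) * min 0 t)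
        (Set.uIoc 0 M) := by
      intro t ht
      rw [Set.uIoc_of_le hxM] at ht
      simp only
      rw [min_eq_left ht.1.le, mul_zero]
    refine ⟨IntervalIntegrable.congr h0 (by simp), ?_⟩
    rw [intervalIntegral.integral_congr_ae (g := fun _ => (0:ℝ))
      (Filter.Eventually.of_forall fun t ht => (h0 ht).symm)]
    simp
  · rw [if_neg hx.ne']
    exact integ_piece α M x hα hα1 hx hxM

lemma fA_cmp {m n : ℕ} (p : Fin m → ℝ) (q : Fin n → ℝ) (hp : NonnegVec p) (hq : NonnegVec q)
    (h : Majorizes p q) (α : ℝ) (hα : 0 < α) (hα1 : α ≠ 1) :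
    fA α p / (α * (1 - α)) ≤ fA α q / (α * (1 - α)) := by
  set M := ∑ i, p i with hM
  have hpM : ∀ i, p i ≤ M := fun i =>
    Finset.single_le_sum (f := p) (fun i _ => hp i) (Finset.mem_univ i)
  have hqM : ∀ i, q i ≤ M := fun i => by
    rw [hM, h.1]
    exact Finset.single_le_sum (f := q) (fun i _ => hq i) (Finset.mem_univ i)
  have hM0 : 0 ≤ M := Finset.sum_nonneg fun i _ => hp i
  have F : ∀ (k : ℕ) (r : Fin k → ℝ), NonnegVec r → (∀ i, r i ≤ M) →
      IntervalIntegrable (fun t : ℝ => t ^ (α - 2) * ∑ i, min (r i) t) MeasureTheory.volume 0 M ∧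
      ∫ t in (0:ℝ)..M, t ^ (α - 2) * ∑ i, min (r i) t =
        fA α r / (α * (1 - α)) + M ^ (α - 1) / (α - 1) * ∑ i, r i := by
    intro k r hr hrM
    have hi := fun i => integ_piece' α M (r i) hα hα1 (hr i) (hrM i)
    simp only [Finset.mul_sum]
    constructor
    · have := IntervalIntegrable.sum (μ := MeasureTheory.volume) (a := 0) (b := M) Finset.univ
        (f := fun i t => t ^ (α - 2) * min (r i) t) (fun i _ => (hi i).1)
      refine this.congr ?_
      intro t _
      simp
    · rw [intervalIntegral.integral_finsetSum (fun i _ => (hi i).1),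
        Finset.sum_congr rfl (fun i _ => (hi i).2), Finset.sum_add_distrib, fA, Finset.sum_div]
  obtain ⟨ip, ep⟩ := F m p hp hpM
  obtain ⟨iq, eq⟩ := F n q hq hqM
  have := intervalIntegral.integral_mono_on hM0 ip iq (fun t ht =>
    mul_le_mul_of_nonneg_left (hinge p q h t ht.1) (Real.rpow_nonneg ht.1 _))
  rw [ep, eq, ← h.1] at this
  linarith

lemma fA_one {n : ℕ} (p : Fin n → ℝ) : fA 1 p = ∑ i, p i := by
  unfold fA
  refine Finset.sum_congr rfl fun i _ => ?_
  split_ifs with h <;> simp [h]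

lemma fA_anti_pos {m n : ℕ} (p : Fin m → ℝ) (q : Fin n → ℝ) (hp : NonnegVec p) (hq : NonnegVec q)
    (h : Majorizes p q) (α : ℝ) (hα : 0 < α) (hα1 : α ≤ 1) : fA α p ≤ fA α q := by
  rcases hα1.eq_or_lt with rfl | hlt
  · rw [fA_one, fA_one, h.1]
  · exact (div_le_div_iff_of_pos_right (mul_pos hα (by linarith))).1
      (fA_cmp p q hp hq h α hα hlt.ne)

lemma fA_mono {m n : ℕ} (p : Fin m → ℝ) (q : Fin n → ℝ) (hp : NonnegVec p) (hq : NonnegVec q)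
    (h : Majorizes p q) (α : ℝ) (hα1 : 1 ≤ α) : fA α q ≤ fA α p := by
  rcases hα1.eq_or_lt with rfl | hlt
  · rw [fA_one, fA_one, h.1]
  · exact (div_le_div_right_of_neg (mul_neg_of_pos_of_neg (by linarith) (by linarith))).1
      (fA_cmp p q hp hq h α (by linarith) hlt.ne')

lemma fA_cont {n : ℕ} (p : Fin n → ℝ) (hp : NonnegVec p) : Continuous fun α => fA α p := by
  unfold fA
  refine continuous_finsetSum _ fun i _ => ?_
  split_ifs with h
  · exact continuous_const
  · exact Real.continuous_const_rpow h

lemma fA_anti {m n : ℕ} (p : Fin m → ℝ) (q : Fin n → ℝ) (hp : NonnegVec p) (hq : NonnegVec q)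
    (h : Majorizes p q) (α : ℝ) (hα : 0 ≤ α) (hα1 : α ≤ 1) : fA α p ≤ fA α q := by
  rcases hα.eq_or_lt with rfl | hlt
  · have tp := ((fA_cont p hp).tendsto 0).mono_left (nhdsWithin_le_nhds (s := Set.Ioi 0))
    have tq := ((fA_cont q hq).tendsto 0).mono_left (nhdsWithin_le_nhds (s := Set.Ioi 0))
    refine le_of_tendsto_of_tendsto tp tq ?_
    filter_upwards [Ioo_mem_nhdsGT (show (0:ℝ) < 1 by norm_num)] with a ha
    exact fA_anti_pos p q hp hq h a ha.1 ha.2.le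
  · exact fA_anti_pos p q hp hq h α hlt hα1

lemma fA_base (α : ℝ) : PhiBase (fun n p => fA α p) := by
  refine ⟨?_, ?_, ?_, ?_, ?_, ?_, ?_⟩
  · intro n p hp
    refine Finset.sum_nonneg fun i _ => ?_
    split_ifs
    · exact le_rfl
    · exact Real.rpow_nonneg (hp i) _
  · intro n σ p _
    exact Equiv.sum_comp σ (fun i => if p i = 0 then 0 else p i ^ α)
  · intro n p _
    simp [fA, Fin.sum_univ_castSucc]
  · intro m n p q _ _
    simp [fA, Fin.sum_univ_add]
  · intro m n p q hp hq
    have e : fA α (kronFin p q) = ∑ x, if kron p q x = 0 then 0 else kron p q x ^ α :=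
      Equiv.sum_comp finProdFinEquiv.symm
        (fun x => if kron p q x = 0 then 0 else kron p q x ^ α)
    simp only [e]
    simp only [fA]
    rw [Fintype.sum_prod_type,
      Finset.sum_mul_sum]
    refine Finset.sum_congr rfl fun i _ => Finset.sum_congr rfl fun j _ => ?_
    simp only [kron]
    by_cases h1 : p i = 0
    · simp [h1]
    · by_cases h2 : q j = 0
      · simp [h2]
      · simp [h1, h2, Real.mul_rpow (hp i) (hq j)]
  · simp [fA]
  · simp [fA]

lemma base_sum (Φ : ∀ n : ℕ, (Fin n → ℝ) → ℝ) (h : PhiBase Φ) :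
    ∀ (n : ℕ) (p : Fin n → ℝ), NonnegVec p → Φ n p = ∑ i, Φ 1 (fun _ => p i) := by
  obtain ⟨_, _, h0, hadd, _, _, hz⟩ := h
  intro n
  induction n with
  | zero =>
    intro p hp
    rw [← h0 0 p hp, Finset.univ_eq_empty, Finset.sum_empty]
    refine Eq.trans ?_ hz
    congr 1
  | succ n ih =>
    intro p hp
    have e : p = Fin.append (fun i : Fin n => p i.castSucc) (fun _ : Fin 1 => p (Fin.last n)) := by
      ext i
      refine Fin.lastCases ?_ (fun j => ?_) i
      · exact (Fin.append_right (fun i : Fin n => p i.castSucc)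
          (fun _ : Fin 1 => p (Fin.last n)) 0).symm
      · exact (Fin.append_left (fun i : Fin n => p i.castSucc)
          (fun _ : Fin 1 => p (Fin.last n)) j).symm
    rw [Fin.sum_univ_castSucc, ← ih (fun i => p i.castSucc) (fun i => hp _),
      ← hadd n 1 _ _ (fun i => hp _) (fun i => hp _), ← e]

lemma base_mul (Φ : ∀ n : ℕ, (Fin n → ℝ) → ℝ) (h : PhiBase Φ) (x y : ℝ) (hx : 0 ≤ x)
    (hy : 0 ≤ y) : Φ 1 (fun _ => x * y) = Φ 1 (fun _ => x) * Φ 1 (fun _ => y) := by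
  obtain ⟨_, _, h0, hadd, hm, _, hz⟩ := h
  exact hm 1 1 (fun _ => x) (fun _ => y) (fun _ => hx) (fun _ => hy)

lemma power_of_mono (φ : ℝ → ℝ) (hnn : ∀ x, 0 ≤ x → 0 ≤ φ x) (h1 : φ 1 = 1)
    (hmul : ∀ x y, 0 ≤ x → 0 ≤ y → φ (x * y) = φ x * φ y)
    (hmono : ∀ x y, 0 < x → x ≤ y → φ x ≤ φ y) :
    ∃ α : ℝ, 0 ≤ α ∧ ∀ x, 0 < x → φ x = x ^ α := by
  have hpos : ∀ x, 0 < x → 0 < φ x := by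
    intro x hx
    refine lt_of_le_of_ne (hnn x hx.le) fun h => ?_
    have := hmul x x⁻¹ hx.le (inv_nonneg.2 hx.le)
    rw [mul_inv_cancel₀ hx.ne', h1, ← h, zero_mul] at this
    exact one_ne_zero this
  let g : ℝ →+ ℝ :=
    { toFun := fun t => Real.log (φ (Real.exp t))
      map_zero' := by simp [h1]
      map_add' := by
        intro s t
        rw [Real.exp_add, hmul _ _ (Real.exp_pos _).le (Real.exp_pos _).le,
          Real.log_mul (hpos _ (Real.exp_pos _)).ne' (hpos _ (Real.exp_pos _)).ne'] }
  have hg : ∀ t, g t = Real.log (φ (Real.exp t)) := fun t => rfl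
  have gm : Monotone g := by
    intro s t hst
    rw [hg, hg]
    exact Real.log_le_log (hpos _ (Real.exp_pos _)) (hmono _ _ (Real.exp_pos _) (Real.exp_le_exp.2 hst))
  have gc : Continuous g := MeasureTheory.Measure.AddMonoidHom.continuous_of_measurable g gm.measurable
  have lin : ∀ t, g t = t * g 1 := by
    intro t
    have := map_real_smul g gc t 1
    simpa using this
  refine ⟨g 1, ?_, ?_⟩
  · have := gm (zero_le_one (α := ℝ))
    simpa using this
  · intro x hx
    have := lin (Real.log x)
    rw [hg, Real.exp_log hx] at this
    rw [Real.rpow_def_of_pos hx, ← this, Real.exp_log (hpos x hx)]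

lemma concave_mono (φ : ℝ → ℝ) (hnn : ∀ x, 0 ≤ x → 0 ≤ φ x)
    (hc : ∀ a b, 0 ≤ b → b ≤ a → φ a + φ b ≤ 2 * φ ((a + b) / 2)) :
    ∀ x y, 0 < x → x ≤ y → φ x ≤ φ y := by
  intro x y hx hxy
  by_contra! hlt
  set d := y - x with hd
  have hd0 : 0 ≤ d := by linarith
  let u : ℕ → ℝ := fun k => φ (x + k * d)
  have hu : ∀ k, u (k + 2) - u (k + 1) ≤ u (k + 1) - u k := by
    intro k
    have := hc (x + (k + 2 : ℕ) * d) (x + k * d) (by positivity) (by push_cast; nlinarith)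
    have e : (x + (k + 2 : ℕ) * d + (x + k * d)) / 2 = x + (k + 1 : ℕ) * d := by push_cast; ring
    rw [e] at this
    simp only [u]
    linarith
  have u0 : u 0 = φ x := by simp [u]
  have u1 : u 1 = φ y := by simp [u, hd]
  have hdiff : ∀ k, u (k + 1) - u k ≤ φ y - φ x := by
    intro k
    induction k with
    | zero => rw [zero_add, u0, u1]
    | succ k ih => exact (hu k).trans ih
  have hk : ∀ k : ℕ, u k ≤ φ x + k * (φ y - φ x) := by
    intro k
    induction k with
    | zero => simp [u0]
    | succ k ih => push_cast; linarith [hdiff k]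
  obtain ⟨k, hk'⟩ := exists_nat_gt (φ x / (φ x - φ y))
  rw [div_lt_iff₀ (by linarith)] at hk'
  have := hk k
  have := hnn (x + k * d) (by positivity)
  simp only [u] at *
  linarith

lemma base_two (Φ : ∀ n : ℕ, (Fin n → ℝ) → ℝ) (h : PhiBase Φ) (a b : ℝ) (ha : 0 ≤ a)
    (hb : 0 ≤ b) : Φ 2 ![a, b] = Φ 1 (fun _ => a) + Φ 1 (fun _ => b) := by
  rw [base_sum Φ h 2 ![a, b] (by intro i; fin_cases i <;> simpa)]
  simp

lemma nn_two {a b : ℝ} (ha : 0 ≤ a) (hb : 0 ≤ b) : NonnegVec (![a, b] : Fin 2 → ℝ) := by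
  intro i; fin_cases i <;> simpa

lemma finish (Φ : ∀ n : ℕ, (Fin n → ℝ) → ℝ) (h : PhiBase Φ) (α : ℝ)
    (hα : ∀ x, 0 < x → Φ 1 (fun _ => x) = x ^ α) (n : ℕ) (p : Fin n → ℝ) (hp : NonnegVec p) :
    Φ n p = fA α p := by
  rw [base_sum Φ h n p hp, fA]
  refine Finset.sum_congr rfl fun i _ => ?_
  split_ifs with h0
  · rw [h0]; exact h.2.2.2.2.2.2
  · exact hα _ (lt_of_le_of_ne (hp i) (Ne.symm h0))

/-- **Classification of monotone homomorphisms on the majorization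
semiring.**  A homomorphism that is antitone for majorization `≽₁` is `f_α`
for some `α ∈ [0,1]`, and one that is monotone for `≽₁` is `f_α` for some
`α ∈ [1,∞)`; conversely all these `f_α` have the listed properties. -/
theorem classification_monotone_homs_majorization :
    (∀ Φ : ∀ n : ℕ, (Fin n → ℝ) → ℝ, PhiBase Φ →
      (∀ (m n : ℕ) (p : Fin m → ℝ) (q : Fin n → ℝ), NonnegVec p → NonnegVec q →
        Majorizes p q → Φ m p ≤ Φ n q) →
      ∃ α : ℝ, 0 ≤ α ∧ α ≤ 1 ∧
        ∀ (n : ℕ) (p : Fin n → ℝ), NonnegVec p → Φ n p = fA α p) ∧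
    (∀ α : ℝ, 0 ≤ α → α ≤ 1 →
      PhiBase (fun n p => fA α p) ∧
      ∀ (m n : ℕ) (p : Fin m → ℝ) (q : Fin n → ℝ), NonnegVec p → NonnegVec q →
        Majorizes p q → fA α p ≤ fA α q) ∧
    (∀ Φ : ∀ n : ℕ, (Fin n → ℝ) → ℝ, PhiBase Φ →
      (∀ (m n : ℕ) (p : Fin m → ℝ) (q : Fin n → ℝ), NonnegVec p → NonnegVec q →
        Majorizes p q → Φ n q ≤ Φ m p) →
      ∃ α : ℝ, 1 ≤ α ∧
        ∀ (n : ℕ) (p : Fin n → ℝ), NonnegVec p → Φ n p = fA α p) ∧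
    (∀ α : ℝ, 1 ≤ α →
      PhiBase (fun n p => fA α p) ∧
      ∀ (m n : ℕ) (p : Fin m → ℝ) (q : Fin n → ℝ), NonnegVec p → NonnegVec q →
        Majorizes p q → fA α q ≤ fA α p) := by
  refine ⟨?_, ?_, ?_, ?_⟩
  · intro Φ h hm
    have hz := h.2.2.2.2.2.2
    have h1 := h.2.2.2.2.2.1
    have hnn : ∀ x : ℝ, 0 ≤ x → 0 ≤ Φ 1 (fun _ => x) := fun x hx => h.1 1 _ (fun _ => hx)
    have hc : ∀ a b : ℝ, 0 ≤ b → b ≤ a → Φ 1 (fun _ => a) + Φ 1 (fun _ => b) ≤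
        2 * Φ 1 (fun _ => (a + b) / 2) := by
      intro a b hb hab
      have ha : 0 ≤ a := hb.trans hab
      have hc : 0 ≤ (a + b) / 2 := by positivity
      have := hm 2 2 _ _ (nn_two ha hb) (nn_two hc hc)
        (maj_two a b _ _ ha hb hc hc (by ring) (by linarith) (by linarith))
      rw [base_two Φ h a b ha hb, base_two Φ h _ _ hc hc] at this
      linarith
    obtain ⟨α, hα0, hα⟩ := power_of_mono (fun x => Φ 1 (fun _ => x)) hnn h1
      (fun x y hx hy => base_mul Φ h x y hx hy)
      (concave_mono (fun x => Φ 1 (fun _ => x)) hnn hc)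
    refine ⟨α, hα0, ?_, finish Φ h α hα⟩
    have := hm 2 2 _ _ (nn_two zero_le_two le_rfl) (nn_two zero_le_one zero_le_one)
      (maj_two 2 0 1 1 zero_le_two le_rfl zero_le_one zero_le_one (by norm_num) (by norm_num)
        (by norm_num))
    rw [base_two Φ h _ _ zero_le_two le_rfl, base_two Φ h _ _ zero_le_one zero_le_one, hz, h1] at this
    have e := hα 2 two_pos
    rw [e] at this
    have h2 : (2:ℝ) ^ α ≤ 2 ^ (1:ℝ) := by rw [Real.rpow_one]; linarith
    exact (Real.rpow_le_rpow_left_iff one_lt_two).1 h2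
  · intro α h0 h1
    exact ⟨fA_base α, fun m n p q hp hq h => fA_anti p q hp hq h α h0 h1⟩
  · intro Φ h hm
    have hz := h.2.2.2.2.2.2
    have h1 := h.2.2.2.2.2.1
    have hnn : ∀ x : ℝ, 0 ≤ x → 0 ≤ Φ 1 (fun _ => x) := fun x hx => h.1 1 _ (fun _ => hx)
    have hs : ∀ a b : ℝ, 0 ≤ a → 0 ≤ b → Φ 1 (fun _ => a) + Φ 1 (fun _ => b) ≤
        Φ 1 (fun _ => a + b) := by
      intro a b ha hb
      have hc : 0 ≤ a + b := by positivity
      have := hm 2 2 _ _ (nn_two hc le_rfl) (nn_two ha hb)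
        (maj_two (a + b) 0 a b hc le_rfl ha hb (by ring) (by linarith) (by linarith))
      rw [base_two Φ h a b ha hb, base_two Φ h _ _ hc le_rfl, hz] at this
      linarith
    obtain ⟨α, hα0, hα⟩ := power_of_mono (fun x => Φ 1 (fun _ => x)) hnn h1
      (fun x y hx hy => base_mul Φ h x y hx hy)
      (fun x y hx hxy => by
        have a1 := hs x (y - x) hx.le (by linarith)
        have a2 := hnn (y - x) (by linarith)
        rw [add_sub_cancel] at a1
        linarith)
    refine ⟨α, ?_, finish Φ h α hα⟩
    have := hs 1 1 zero_le_one zero_le_one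
    have e := hα 2 two_pos
    rw [one_add_one_eq_two, e, h1] at this
    have h2 : (2:ℝ) ^ (1:ℝ) ≤ 2 ^ α := by rw [Real.rpow_one]; linarith
    exact (Real.rpow_le_rpow_left_iff one_lt_two).1 h2
  · intro α h1
    exact ⟨fA_base α, fun m n p q hp hq h => fA_mono p q hp hq h α h1⟩
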